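/- Let m1, m2, m3, m4 > 0 and M = m1+m2+m3+m4. There exists exactly one r ∈ ℝ⁶ with all six coordinates positive satisfying I(r) = 1, F(r) = 0, and for which there exist real numbers λ and σ with ∇U(r) + λ M ∇I(r) + σ ∇F(r) = 0. Equivalently, the restriction of the Newtonian potential U to the set M⁺ = { r : r_ij ≥ 0, I(r) = 1, F(r) = 0 } has a unique critical point. -/

import Mathlib

noncomputable section

/-- `F` as a function of the vector of mutual distances
`r = (r12, r13, r14, r23, r24, r34)` (indexed `0,…,5`). -/
def F (r : Fin 6 → ℝ) : ℝ :=
  2 * r 0 * r 5 - (r 1) ^ 2 - (r 4) ^ 2 + (r 3) ^ 2 + (r 2) ^ 2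

/-- The Newtonian potential `U(r) = Σ_{i<j} m_i m_j / r_ij`. -/
def U (m1 m2 m3 m4 : ℝ) (r : Fin 6 → ℝ) : ℝ :=
  m1 * m2 / r 0 + m1 * m3 / r 1 + m1 * m4 / r 2 +
    m2 * m3 / r 3 + m2 * m4 / r 4 + m3 * m4 / r 5

/-- The moment of inertia `I(r) = (1/(2M)) Σ_{i<j} m_i m_j r_ij²`. -/
def Iner (m1 m2 m3 m4 : ℝ) (r : Fin 6 → ℝ) : ℝ :=
  (1 / (2 * (m1 + m2 + m3 + m4))) *
    (m1 * m2 * (r 0) ^ 2 + m1 * m3 * (r 1) ^ 2 + m1 * m4 * (r 2) ^ 2 +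
      m2 * m3 * (r 3) ^ 2 + m2 * m4 * (r 4) ^ 2 + m3 * m4 * (r 5) ^ 2)

/-- The linear form `v ↦ Σ i, c i * v i`. -/
def coordForm (c : Fin 6 → ℝ) : (Fin 6 → ℝ) →L[ℝ] ℝ :=
  ∑ i, c i • ContinuousLinearMap.proj (R := ℝ) (φ := fun _ : Fin 6 => ℝ) i

lemma coordForm_apply (c v : Fin 6 → ℝ) : coordForm c v = ∑ i, c i * v i := by
  simp [coordForm]

lemma coordForm_eq_zero_iff (c : Fin 6 → ℝ) : coordForm c = 0 ↔ ∀ i, c i = 0 := by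
  constructor
  · intro h i
    have := congrArg (fun L => L (Pi.single i (1 : ℝ))) h
    simpa [coordForm_apply, Pi.single_apply] using this
  · intro h
    ext v
    simp [coordForm_apply, h]

lemma hasFDerivAt_coord (i : Fin 6) (r : Fin 6 → ℝ) :
    HasFDerivAt (fun r : Fin 6 → ℝ => r i)
      (ContinuousLinearMap.proj (R := ℝ) (φ := fun _ : Fin 6 => ℝ) i) r :=
  hasFDerivAt_apply i r

lemma hasFDerivAt_sq_coord (i : Fin 6) (r : Fin 6 → ℝ) :
    HasFDerivAt (fun r : Fin 6 → ℝ => r i ^ 2)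
      ((2 * r i) • ContinuousLinearMap.proj (R := ℝ) (φ := fun _ : Fin 6 => ℝ) i) r := by
  simpa using (hasFDerivAt_coord i r).pow 2

lemma hasFDerivAt_div_coord (a : ℝ) (i : Fin 6) (r : Fin 6 → ℝ) (h : r i ≠ 0) :
    HasFDerivAt (fun r : Fin 6 → ℝ => a / r i)
      ((-(a / r i ^ 2)) • ContinuousLinearMap.proj (R := ℝ) (φ := fun _ : Fin 6 => ℝ) i) r := by
  have h1 : HasDerivAt (fun x : ℝ => a / x) (-(a / r i ^ 2)) (r i) := by
    have := (hasDerivAt_inv h).const_mul a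
    simpa [div_eq_mul_inv] using this
  exact h1.comp_hasFDerivAt r (hasFDerivAt_coord i r)

lemma fderiv_F (r : Fin 6 → ℝ) :
    fderiv ℝ F r = coordForm ![2 * r 5, -(2 * r 1), 2 * r 2, 2 * r 3, -(2 * r 4), 2 * r 0] := by
  have h := ((((((hasFDerivAt_coord 0 r).const_mul 2).mul (hasFDerivAt_coord 5 r)).sub
    (hasFDerivAt_sq_coord 1 r)).sub (hasFDerivAt_sq_coord 4 r)).add
    (hasFDerivAt_sq_coord 3 r)).add (hasFDerivAt_sq_coord 2 r)
  refine (HasFDerivAt.fderiv (f := F) h).trans ?_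
  ext v
  simp [coordForm_apply, Fin.sum_univ_six]
  ring

lemma fderiv_Iner (m1 m2 m3 m4 : ℝ) (r : Fin 6 → ℝ) :
    (m1 + m2 + m3 + m4) • fderiv ℝ (Iner m1 m2 m3 m4) r =
      ((m1 + m2 + m3 + m4) / (m1 + m2 + m3 + m4)) •
        coordForm ![m1 * m2 * r 0, m1 * m3 * r 1, m1 * m4 * r 2,
          m2 * m3 * r 3, m2 * m4 * r 4, m3 * m4 * r 5] := by
  have h := (((((((hasFDerivAt_sq_coord 0 r).const_mul (m1 * m2)).add
    ((hasFDerivAt_sq_coord 1 r).const_mul (m1 * m3))).add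
    ((hasFDerivAt_sq_coord 2 r).const_mul (m1 * m4))).add
    ((hasFDerivAt_sq_coord 3 r).const_mul (m2 * m3))).add
    ((hasFDerivAt_sq_coord 4 r).const_mul (m2 * m4))).add
    ((hasFDerivAt_sq_coord 5 r).const_mul (m3 * m4))).const_mul (1 / (2 * (m1 + m2 + m3 + m4)))
  rw [HasFDerivAt.fderiv (f := Iner m1 m2 m3 m4) h]
  ext v
  simp [coordForm_apply, Fin.sum_univ_six]
  ring

lemma fderiv_U (m1 m2 m3 m4 : ℝ) (r : Fin 6 → ℝ) (hr : ∀ i, 0 < r i) :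
    fderiv ℝ (U m1 m2 m3 m4) r =
      coordForm ![-(m1 * m2 / r 0 ^ 2), -(m1 * m3 / r 1 ^ 2), -(m1 * m4 / r 2 ^ 2),
        -(m2 * m3 / r 3 ^ 2), -(m2 * m4 / r 4 ^ 2), -(m3 * m4 / r 5 ^ 2)] := by
  have h := (((((hasFDerivAt_div_coord (m1 * m2) 0 r (hr 0).ne').add
    (hasFDerivAt_div_coord (m1 * m3) 1 r (hr 1).ne')).add
    (hasFDerivAt_div_coord (m1 * m4) 2 r (hr 2).ne')).add
    (hasFDerivAt_div_coord (m2 * m3) 3 r (hr 3).ne')).add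
    (hasFDerivAt_div_coord (m2 * m4) 4 r (hr 4).ne')).add
    (hasFDerivAt_div_coord (m3 * m4) 5 r (hr 5).ne')
  refine (HasFDerivAt.fderiv (f := U m1 m2 m3 m4) h).trans ?_
  ext v
  simp [coordForm_apply, Fin.sum_univ_six]

/-- The scalar form of the Lagrange condition, with denominators cleared and `s = 2σ`. -/
def LagrangeSystem (m1 m2 m3 m4 lam s : ℝ) (r : Fin 6 → ℝ) : Prop :=
  (lam * (m1 * m2) * r 0 + s * r 5) * r 0 ^ 2 = m1 * m2 ∧
  (lam * (m1 * m3) - s) * r 1 ^ 3 = m1 * m3 ∧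
  (lam * (m1 * m4) + s) * r 2 ^ 3 = m1 * m4 ∧
  (lam * (m2 * m3) + s) * r 3 ^ 3 = m2 * m3 ∧
  (lam * (m2 * m4) - s) * r 4 ^ 3 = m2 * m4 ∧
  (lam * (m3 * m4) * r 5 + s * r 0) * r 5 ^ 2 = m3 * m4

lemma neg_div_sq_add_eq_zero_iff {a b x : ℝ} (hx : 0 < x) :
    -(a / x ^ 2) + b = 0 ↔ b * x ^ 2 = a := by
  have : a / x ^ 2 = b ↔ a = b * x ^ 2 := div_eq_iff (by positivity)
  constructor
  · intro h; exact (this.1 (by linarith)).symm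
  · intro h; have := this.2 h.symm; linarith

lemma lagrange_iff (m1 m2 m3 m4 : ℝ) (hM : m1 + m2 + m3 + m4 ≠ 0) (r : Fin 6 → ℝ)
    (hr : ∀ i, 0 < r i) (lam sigma : ℝ) :
    fderiv ℝ (U m1 m2 m3 m4) r
            + (lam * (m1 + m2 + m3 + m4)) • fderiv ℝ (Iner m1 m2 m3 m4) r
            + sigma • fderiv ℝ F r = 0 ↔
      LagrangeSystem m1 m2 m3 m4 lam (2 * sigma) r := by
  rw [mul_smul, fderiv_Iner, div_self hM, one_smul, fderiv_F, fderiv_U _ _ _ _ _ hr]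
  have key : ∀ a b c : Fin 6 → ℝ, coordForm a + lam • coordForm b + sigma • coordForm c =
      coordForm (fun i => a i + (lam * b i + sigma * c i)) := by
    intro a b c
    ext v
    simp [coordForm_apply, Fin.sum_univ_six]
    ring
  rw [key, coordForm_eq_zero_iff]
  simp only [Fin.forall_fin_succ, LagrangeSystem]
  simp [neg_div_sq_add_eq_zero_iff, hr, -mul_neg]
  ring_nf

/-- The positive root of `a x³ + t x = a` is antitone in `t`. -/
lemma le_of_cubic {a x x' t t' : ℝ} (ha : 0 < a) (hx : 0 < x) (hx' : 0 < x')
    (h : a * x ^ 3 + t * x = a) (h' : a * x' ^ 3 + t' * x' = a) (ht : t ≤ t') : x' ≤ x := by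
  by_contra! hlt
  have h3 : x ^ 3 < x' ^ 3 := by gcongr
  have h1 : t * x' ≤ t' * x' := by gcongr
  have : a * x' * (1 - x ^ 3) ≤ a * x * (1 - x' ^ 3) := by nlinarith
  have h5: x * x' * (x' ^2 - x ^2) > 0 := by
    have : x^2 < x'^2 := by gcongr
    have := sub_pos.2 this
    positivity
  nlinarith [mul_pos ha h5, mul_lt_mul_of_pos_left hlt ha]

lemma le_of_mul_cube {a b b' x x' : ℝ} (ha : 0 < a) (hx : 0 < x) (hx' : 0 < x')
    (h : b * x ^ 3 = a) (h' : b' * x' ^ 3 = a) (hb : b ≤ b') : x' ≤ x := by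
  by_contra! hlt
  have h3 : x ^ 3 < x' ^ 3 := by gcongr
  have hb0 : 0 < b := by
    by_contra! hn
    have : 0 < x ^ 3 := by positivity
    nlinarith
  have : 0 < x' ^ 3 := by positivity
  nlinarith

lemma nonneg_of_F_eq_zero {m1 m2 m3 m4 s : ℝ} (hm1 : 0 < m1) (hm2 : 0 < m2)
    (hm3 : 0 < m3) (hm4 : 0 < m4) {r : Fin 6 → ℝ} (hr : ∀ i, 0 < r i)
    (h : LagrangeSystem m1 m2 m3 m4 1 s r) (hF : F r = 0) : 0 ≤ s := by
  by_contra! hs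
  obtain ⟨-, h1, h2, h3, h4, -⟩ := h
  have k1 : r 1 ≤ 1 := le_of_mul_cube (b := m1 * m3) (by positivity) one_pos (hr 1) (by ring) h1
    (by linarith)
  have k4 : r 4 ≤ 1 := le_of_mul_cube (b := m2 * m4) (by positivity) one_pos (hr 4) (by ring) h4
    (by linarith)
  have k2 : 1 ≤ r 2 := le_of_mul_cube (b' := m1 * m4) (by positivity) (hr 2) one_pos h2 (by ring)
    (by linarith)
  have k3 : 1 ≤ r 3 := le_of_mul_cube (b' := m2 * m3) (by positivity) (hr 3) one_pos h3 (by ring)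
    (by linarith)
  have := mul_pos (hr 0) (hr 5)
  unfold F at hF
  nlinarith [hr 1, hr 4]

lemma eq_of_le {m1 m2 m3 m4 s s' : ℝ} (hm1 : 0 < m1) (hm2 : 0 < m2)
    (hm3 : 0 < m3) (hm4 : 0 < m4) {r r' : Fin 6 → ℝ} (hr : ∀ i, 0 < r i) (hr' : ∀ i, 0 < r' i)
    (h : LagrangeSystem m1 m2 m3 m4 1 s r) (h' : LagrangeSystem m1 m2 m3 m4 1 s' r')
    (hF : F r = 0) (hF' : F r' = 0) (hs' : 0 ≤ s') (hss : s ≤ s') : r = r' := by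
  obtain ⟨h0, h1, h2, h3, h4, h5⟩ := h
  obtain ⟨h0', h1', h2', h3', h4', h5'⟩ := h'
  have k1 : r 1 ≤ r' 1 :=
    le_of_mul_cube (by positivity) (hr' 1) (hr 1) h1' h1 (by linarith)
  have k4 : r 4 ≤ r' 4 :=
    le_of_mul_cube (by positivity) (hr' 4) (hr 4) h4' h4 (by linarith)
  have k2 : r' 2 ≤ r 2 :=
    le_of_mul_cube (by positivity) (hr 2) (hr' 2) h2 h2' (by linarith)
  have k3 : r' 3 ≤ r 3 :=
    le_of_mul_cube (by positivity) (hr 3) (hr' 3) h3 h3' (by linarith)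
  have c0 : m1 * m2 * r 0 ^ 3 + (s * (r 0 * r 5)) * r 0 = m1 * m2 := by linear_combination h0
  have c0' : m1 * m2 * r' 0 ^ 3 + (s' * (r' 0 * r' 5)) * r' 0 = m1 * m2 := by
    linear_combination h0'
  have c5 : m3 * m4 * r 5 ^ 3 + (s * (r 0 * r 5)) * r 5 = m3 * m4 := by linear_combination h5
  have c5' : m3 * m4 * r' 5 ^ 3 + (s' * (r' 0 * r' 5)) * r' 5 = m3 * m4 := by
    linear_combination h5'
  have p0 := hr 0
  have p5 := hr 5
  have ht : s * (r 0 * r 5) ≤ s' * (r' 0 * r' 5) := by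
    by_contra! hlt
    have l0 : r 0 ≤ r' 0 := le_of_cubic (by positivity) (hr' 0) (hr 0) c0' c0 hlt.le
    have l5 : r 5 ≤ r' 5 := le_of_cubic (by positivity) (hr' 5) (hr 5) c5' c5 hlt.le
    have : s * (r 0 * r 5) ≤ s' * (r' 0 * r' 5) := by
      have := (hr' 0).le
      calc s * (r 0 * r 5) ≤ s' * (r 0 * r 5) := by gcongr
        _ ≤ _ := by gcongr
    linarith
  have k0 : r' 0 ≤ r 0 := le_of_cubic (by positivity) (hr 0) (hr' 0) c0 c0' ht
  have k5 : r' 5 ≤ r 5 := le_of_cubic (by positivity) (hr 5) (hr' 5) c5 c5' ht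
  unfold F at hF hF'
  have q1 : r 1 ^ 2 ≤ r' 1 ^ 2 := by have := (hr 1).le; gcongr
  have q4 : r 4 ^ 2 ≤ r' 4 ^ 2 := by have := (hr 4).le; gcongr
  have q2 : r' 2 ^ 2 ≤ r 2 ^ 2 := by have := (hr' 2).le; gcongr
  have q3 : r' 3 ^ 2 ≤ r 3 ^ 2 := by have := (hr' 3).le; gcongr
  have q0 : r' 0 * r' 5 ≤ r 0 * r' 5 := by have := (hr' 5).le; gcongr
  have q5 : r 0 * r' 5 ≤ r 0 * r 5 := by gcongr
  funext i
  fin_cases i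
  · exact mul_right_cancel₀ (hr' 5).ne' (show r 0 * r' 5 = r' 0 * r' 5 by linarith)
  · exact (pow_left_inj₀ (hr 1).le (hr' 1).le two_ne_zero).1 (by linarith)
  · exact (pow_left_inj₀ (hr 2).le (hr' 2).le two_ne_zero).1 (by linarith)
  · exact (pow_left_inj₀ (hr 3).le (hr' 3).le two_ne_zero).1 (by linarith)
  · exact (pow_left_inj₀ (hr 4).le (hr' 4).le two_ne_zero).1 (by linarith)
  · exact mul_left_cancel₀ (hr 0).ne' (show r 0 * r 5 = r 0 * r' 5 by linarith)

lemma LagrangeSystem.smul {m1 m2 m3 m4 lam s c : ℝ} {r : Fin 6 → ℝ} (hc : c ≠ 0)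
    (h : LagrangeSystem m1 m2 m3 m4 lam s r) :
    LagrangeSystem m1 m2 m3 m4 (lam / c ^ 3) (s / c ^ 3) (c • r) := by
  obtain ⟨h0, h1, h2, h3, h4, h5⟩ := h
  simp only [LagrangeSystem, Pi.smul_apply, smul_eq_mul]
  refine ⟨?_, ?_, ?_, ?_, ?_, ?_⟩
  · refine Eq.trans ?_ h0; field_simp
  · refine Eq.trans ?_ h1; field_simp
  · refine Eq.trans ?_ h2; field_simp
  · refine Eq.trans ?_ h3; field_simp
  · refine Eq.trans ?_ h4; field_simp
  · refine Eq.trans ?_ h5; field_simp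

lemma F_smul (c : ℝ) (r : Fin 6 → ℝ) : F (c • r) = c ^ 2 * F r := by
  simp only [F, Pi.smul_apply, smul_eq_mul]; ring

lemma Iner_smul (m1 m2 m3 m4 c : ℝ) (r : Fin 6 → ℝ) :
    Iner m1 m2 m3 m4 (c • r) = c ^ 2 * Iner m1 m2 m3 m4 r := by
  simp only [Iner, Pi.smul_apply, smul_eq_mul]; ring

lemma Iner_pos {m1 m2 m3 m4 : ℝ} (hm1 : 0 < m1) (hm2 : 0 < m2)
    (hm3 : 0 < m3) (hm4 : 0 < m4) {r : Fin 6 → ℝ} (hr : ∀ i, 0 < r i) :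
    0 < Iner m1 m2 m3 m4 r := by
  have := hr 0; have := hr 1; have := hr 2; have := hr 3; have := hr 4; have := hr 5
  unfold Iner; positivity

lemma lam_pos {m1 m2 m3 m4 lam s : ℝ} (hm1 : 0 < m1) (hm2 : 0 < m2)
    (hm3 : 0 < m3) (hm4 : 0 < m4) {r : Fin 6 → ℝ} (hr : ∀ i, 0 < r i)
    (h : LagrangeSystem m1 m2 m3 m4 lam s r) (hF : F r = 0) : 0 < lam := by
  obtain ⟨h0, h1, h2, h3, h4, h5⟩ := h
  have p0 := hr 0; have p1 := hr 1; have p2 := hr 2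
  have p3 := hr 3; have p4 := hr 4; have p5 := hr 5
  have key : lam * (m1 * m2 * r 0 ^ 2 + m1 * m3 * r 1 ^ 2 + m1 * m4 * r 2 ^ 2 +
      m2 * m3 * r 3 ^ 2 + m2 * m4 * r 4 ^ 2 + m3 * m4 * r 5 ^ 2) = U m1 m2 m3 m4 r - s * F r := by
    have e0 := (div_eq_iff p0.ne').2 (by linear_combination -h0 :
      m1 * m2 = (lam * (m1 * m2) * r 0 + s * r 5) * r 0 * r 0)
    have e1 := (div_eq_iff p1.ne').2 (by linear_combination -h1 :
      m1 * m3 = (lam * (m1 * m3) - s) * r 1 ^ 2 * r 1)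
    have e2 := (div_eq_iff p2.ne').2 (by linear_combination -h2 :
      m1 * m4 = (lam * (m1 * m4) + s) * r 2 ^ 2 * r 2)
    have e3 := (div_eq_iff p3.ne').2 (by linear_combination -h3 :
      m2 * m3 = (lam * (m2 * m3) + s) * r 3 ^ 2 * r 3)
    have e4 := (div_eq_iff p4.ne').2 (by linear_combination -h4 :
      m2 * m4 = (lam * (m2 * m4) - s) * r 4 ^ 2 * r 4)
    have e5 := (div_eq_iff p5.ne').2 (by linear_combination -h5 :
      m3 * m4 = (lam * (m3 * m4) * r 5 + s * r 0) * r 5 * r 5)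
    rw [U, F, e0, e1, e2, e3, e4, e5]
    ring
  have hU : 0 < U m1 m2 m3 m4 r := by unfold U; positivity
  rw [hF, mul_zero, sub_zero] at key
  rw [← key] at hU
  exact (pos_iff_pos_of_mul_pos hU).2 (by positivity)

lemma exists_cubic_root :
    ∃ k : ℝ → ℝ, Continuous k ∧ (∀ t, 0 < k t) ∧ ∀ t, k t ^ 3 + t * k t = 1 := by
  let f : Set.Ioi (0 : ℝ) → ℝ := fun x => (x : ℝ) ^ 2 - (x : ℝ)⁻¹
  have hmono : StrictMono f := by
    rintro ⟨x, hx⟩ ⟨y, hy⟩ hxy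
    have hxy : x < y := hxy
    have hx : 0 < x := hx
    have h1 : x ^ 2 < y ^ 2 := by gcongr
    have h2 : y⁻¹ < x⁻¹ := by gcongr
    simp only [f]; linarith
  have hsurj : Function.Surjective f := by
    intro t
    have hA : 0 < 1 + |t| := by positivity
    have hcont : ContinuousOn (fun x : ℝ => x ^ 2 - x⁻¹) (Set.Icc (1 + |t|)⁻¹ (1 + |t|)) := by
      refine ContinuousOn.sub (by fun_prop) (continuousOn_inv₀.mono ?_)
      intro x hx
      exact ((inv_pos.2 hA).trans_le hx.1).ne'
    have h1 : (1 + |t|)⁻¹ ≤ 1 := inv_le_one_of_one_le₀ (by linarith [abs_nonneg t])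
    obtain ⟨x, hx, hxt⟩ := intermediate_value_Icc (by linarith [abs_nonneg t]) hcont
      (show t ∈ _ from ⟨by
        have : (1 + |t|)⁻¹ ^ 2 ≤ 1 := pow_le_one₀ (by positivity) h1
        simp only [inv_inv]; linarith [neg_abs_le t], by
        have := le_abs_self t
        have := abs_nonneg t
        nlinarith [inv_mul_cancel₀ hA.ne']⟩)
    exact ⟨⟨x, (inv_pos.2 hA).trans_le hx.1⟩, hxt⟩
  let e := hmono.orderIsoOfSurjective f hsurj
  refine ⟨fun t => (e.symm (-t) : ℝ), ?_, fun t => (e.symm (-t)).2, fun t => ?_⟩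
  · have := e.symm.continuous
    fun_prop
  · have h : f (e.symm (-t)) = -t := e.apply_symm_apply (-t)
    have hp : (0 : ℝ) < e.symm (-t) := (e.symm (-t)).2
    simp only [f] at h
    field_simp at h
    linarith

/-- The inverse cube root `q`, as a function on the positive reals with `u * q u ^ 3 = 1`. -/
lemma exists_inv_cbrt :
    ∃ q : ℝ → ℝ, ContinuousOn q (Set.Ioi 0) ∧ (∀ u, 0 < u → 0 < q u) ∧
      ∀ u, 0 < u → u * q u ^ 3 = 1 := by
  refine ⟨fun u => u ^ (-(1 / 3) : ℝ), fun u hu => ?_, fun u hu => Real.rpow_pos_of_pos hu _,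
    fun u hu => ?_⟩
  · exact (Real.continuousAt_rpow_const u _ (Or.inl (ne_of_gt hu))).continuousWithinAt
  · rw [← Real.rpow_natCast, ← Real.rpow_mul hu.le]
    norm_num [Real.rpow_neg_one, hu.ne']

/-- Existence of a solution with multiplier `lam = 1`: along the curve of solutions of the
Lagrange system parametrized by `t = s r₁₂ r₃₄`, `F` changes sign. The parameter `s` is truncated
below `min (m1 m3) (m2 m4)`, where the solutions blow up. -/
lemma exists_normalized {m1 m2 m3 m4 : ℝ} (hm1 : 0 < m1) (hm2 : 0 < m2)
    (hm3 : 0 < m3) (hm4 : 0 < m4) :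
    ∃ (r : Fin 6 → ℝ) (s : ℝ), (∀ i, 0 < r i) ∧ F r = 0 ∧ LagrangeSystem m1 m2 m3 m4 1 s r := by
  obtain ⟨k, hkc, hkp, hk⟩ := exists_cubic_root
  obtain ⟨q, hqc, hqp, hq⟩ := exists_inv_cbrt
  have a12 : 0 < m1 * m2 := by positivity
  have a13 : 0 < m1 * m3 := by positivity
  have a14 : 0 < m1 * m4 := by positivity
  have a23 : 0 < m2 * m3 := by positivity
  have a24 : 0 < m2 * m4 := by positivity
  have a34 : 0 < m3 * m4 := by positivity
  have hk1 : ∀ t, 0 ≤ t → k t ≤ 1 := fun t ht =>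
    le_of_cubic (t := 0) one_pos one_pos (hkp t) (by ring) (by linarith [hk t]) ht
  have hq1 : ∀ u, 1 ≤ u → q u ≤ 1 := fun u hu =>
    le_of_mul_cube (b := 1) one_pos one_pos (hqp u (by linarith)) (by ring) (hq u (by linarith)) hu
  have hq4 : 4 ≤ q (1 / 64) :=
    le_of_mul_cube one_pos (hqp _ (by norm_num)) (by norm_num) (hq _ (by norm_num))
      (b' := 1 / 64) (by norm_num) le_rfl
  obtain ⟨c, hc0, hc13, hc24, hc⟩ : ∃ c : ℝ, 0 < c ∧ c ≤ m1 * m3 ∧ c ≤ m2 * m4 ∧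
      (c = m1 * m3 ∨ c = m2 * m4) :=
    ⟨min (m1 * m3) (m2 * m4), lt_min a13 a24, min_le_left _ _, min_le_right _ _, min_choice _ _⟩
  let x : ℝ → ℝ := fun t => k (t / (m1 * m2))
  let y : ℝ → ℝ := fun t => k (t / (m3 * m4))
  let S : ℝ → ℝ := fun t => t / (x t * y t)
  let s : ℝ → ℝ := fun t => min (S t) (63 / 64 * c)
  have hxp : ∀ t, 0 < x t := fun t => hkp _
  have hyp : ∀ t, 0 < y t := fun t => hkp _
  have hxy1 : ∀ t, 0 ≤ t → x t * y t ≤ 1 := fun t ht =>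
    mul_le_one₀ (hk1 _ (by positivity)) (hyp t).le (hk1 _ (by positivity))
  have hs0 : ∀ t, 0 ≤ t → 0 ≤ s t := fun t ht =>
    le_min (div_nonneg ht (mul_pos (hxp t) (hyp t)).le) (by positivity)
  have hsc : ∀ t, s t ≤ 63 / 64 * c := fun t => min_le_right _ _
  have hxc : Continuous x := by fun_prop
  have hyc : Continuous y := by fun_prop
  have hsC : Continuous s := by
    have : Continuous S := continuous_id.div (hxc.mul hyc) fun t => (mul_pos (hxp t) (hyp t)).ne'
    exact this.min continuous_const
  have hminus : ∀ a, c ≤ a → ∀ t, 0 < 1 - s t / a := by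
    intro a ha t
    rw [sub_pos, div_lt_one (by linarith)]
    linarith [hsc t]
  have hplus : ∀ a, 0 < a → ∀ t, 0 ≤ t → 1 ≤ 1 + s t / a := by
    intro a ha t ht
    have := div_nonneg (hs0 t ht) ha.le
    linarith
  let r : ℝ → Fin 6 → ℝ := fun t => ![x t, q (1 - s t / (m1 * m3)), q (1 + s t / (m1 * m4)),
    q (1 + s t / (m2 * m3)), q (1 - s t / (m2 * m4)), y t]
  have hFr : ∀ t, F (r t) = 2 * x t * y t - q (1 - s t / (m1 * m3)) ^ 2
      - q (1 - s t / (m2 * m4)) ^ 2 + q (1 + s t / (m2 * m3)) ^ 2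
      + q (1 + s t / (m1 * m4)) ^ 2 := fun t => rfl
  have hcm : ∀ a, c ≤ a → ContinuousOn (fun t => q (1 - s t / a)) (Set.Icc 0 c) := fun a ha =>
    hqc.comp (by fun_prop) fun t _ => hminus a ha t
  have hcp : ∀ a, 0 < a → ContinuousOn (fun t => q (1 + s t / a)) (Set.Icc 0 c) := fun a ha =>
    hqc.comp (by fun_prop) fun t ht => one_pos.trans_le (hplus a ha t ht.1)
  have hcont : ContinuousOn (fun t => F (r t)) (Set.Icc 0 c) := by
    simp only [hFr]
    exact ((((by fun_prop : ContinuousOn (fun t => 2 * x t * y t) _).sub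
      ((hcm _ hc13).pow 2)).sub ((hcm _ hc24).pow 2)).add ((hcp _ a23).pow 2)).add
      ((hcp _ a14).pow 2)
  have hneg : ∀ t, 0 ≤ t → 63 / 64 * c ≤ S t → F (r t) < 0 := by
    intro t ht hS
    have hst : s t = 63 / 64 * c := min_eq_right hS
    have b1 : q (1 + s t / (m2 * m3)) ^ 2 ≤ 1 :=
      pow_le_one₀ (hqp _ (by linarith [hplus _ a23 t ht])).le (hq1 _ (hplus _ a23 t ht))
    have b2 : q (1 + s t / (m1 * m4)) ^ 2 ≤ 1 :=
      pow_le_one₀ (hqp _ (by linarith [hplus _ a14 t ht])).le (hq1 _ (hplus _ a14 t ht))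
    have b3 : 16 ≤ q (1 - s t / (m1 * m3)) ^ 2 + q (1 - s t / (m2 * m4)) ^ 2 := by
      have : 1 - s t / c = 1 / 64 := by rw [hst]; field_simp; norm_num
      rcases hc with rfl | rfl
      · rw [this]; nlinarith [sq_nonneg (q (1 - s t / (m2 * m4)))]
      · rw [this]; nlinarith [sq_nonneg (q (1 - s t / (m1 * m3)))]
    rw [hFr]
    linarith [hxy1 t ht]
  have h0 : 0 ≤ F (r 0) := by
    have hs : s 0 = 0 := by simp [s, S, hc0.le]
    have := mul_pos (hxp 0) (hyp 0)
    rw [hFr, hs]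
    simp only [zero_div, sub_zero, add_zero]
    linarith
  have hSc : c ≤ S c := (le_div_iff₀ (mul_pos (hxp c) (hyp c))).2
    (mul_le_of_le_one_right hc0.le (hxy1 c hc0.le))
  obtain ⟨t, ht, hFt⟩ := intermediate_value_Icc' hc0.le hcont
    (show (0 : ℝ) ∈ _ from ⟨(hneg c hc0.le (by linarith)).le, h0⟩)
  have hFt : F (r t) = 0 := hFt
  have hS : s t = S t := min_eq_left (by
    by_contra! hlt
    exact (hneg t ht.1 hlt.le).ne hFt)
  have hsxy : s t * (x t * y t) = t := by
    rw [hS]; exact div_mul_cancel₀ _ (mul_pos (hxp t) (hyp t)).ne'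
  have hx : x t ^ 3 + t / (m1 * m2) * x t = 1 := hk _
  have hy : y t ^ 3 + t / (m3 * m4) * y t = 1 := hk _
  have hqm : ∀ a, c ≤ a → (1 * a - s t) * q (1 - s t / a) ^ 3 = a := by
    intro a ha
    have ha0 : a ≠ 0 := by linarith
    have e : 1 * a - s t = a * (1 - s t / a) := by field_simp
    rw [e, mul_assoc, hq _ (hminus a ha t), mul_one]
  have hqa : ∀ a, 0 < a → (1 * a + s t) * q (1 + s t / a) ^ 3 = a := by
    intro a ha
    have e : 1 * a + s t = a * (1 + s t / a) := by field_simp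
    rw [e, mul_assoc, hq _ (one_pos.trans_le (hplus a ha t ht.1)), mul_one]
  refine ⟨r t, s t, fun i => ?_, hFt, ?_, hqm _ hc13, hqa _ a14, hqa _ a23, hqm _ hc24, ?_⟩
  · fin_cases i
    · exact hxp t
    · exact hqp _ (hminus _ hc13 t)
    · exact hqp _ (one_pos.trans_le (hplus _ a14 t ht.1))
    · exact hqp _ (one_pos.trans_le (hplus _ a23 t ht.1))
    · exact hqp _ (hminus _ hc24 t)
    · exact hyp t
  · show (1 * (m1 * m2) * x t + s t * y t) * x t ^ 2 = m1 * m2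
    have : m1 * m2 * (t / (m1 * m2)) = t := mul_div_cancel₀ _ a12.ne'
    linear_combination m1 * m2 * hx + x t * hsxy - x t * this
  · show (1 * (m3 * m4) * y t + s t * x t) * y t ^ 2 = m3 * m4
    have : m3 * m4 * (t / (m3 * m4)) = t := mul_div_cancel₀ _ a34.ne'
    linear_combination m3 * m4 * hy + y t * hsxy - y t * this

/-- Every solution is a positive multiple of one with multiplier `lam = 1`. -/
lemma exists_normalization {m1 m2 m3 m4 lam s : ℝ} (hm1 : 0 < m1) (hm2 : 0 < m2)
    (hm3 : 0 < m3) (hm4 : 0 < m4) {r : Fin 6 → ℝ} (hr : ∀ i, 0 < r i) (hF : F r = 0)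
    (h : LagrangeSystem m1 m2 m3 m4 lam s r) :
    ∃ c s' : ℝ, 0 < c ∧ LagrangeSystem m1 m2 m3 m4 1 s' (c • r) := by
  have hl := lam_pos hm1 hm2 hm3 hm4 hr h hF
  obtain ⟨q, -, hqp, hq⟩ := exists_inv_cbrt
  have hc := hqp lam⁻¹ (inv_pos.2 hl)
  have h3 : q lam⁻¹ ^ 3 = lam := by
    have := hq lam⁻¹ (inv_pos.2 hl)
    rwa [inv_mul_eq_one₀ hl.ne', eq_comm] at this
  refine ⟨q lam⁻¹, s / q lam⁻¹ ^ 3, hc, ?_⟩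
  have h1 : lam / q lam⁻¹ ^ 3 = 1 := by rw [h3, div_self hl.ne']
  exact h1 ▸ h.smul hc.ne'

lemma eq_of_smul_eq_smul {m1 m2 m3 m4 c c' : ℝ} {r r' : Fin 6 → ℝ} (hc : 0 < c) (hc' : 0 < c')
    (hI : Iner m1 m2 m3 m4 r = 1) (hI' : Iner m1 m2 m3 m4 r' = 1) (h : c • r = c' • r') :
    r = r' := by
  have h2 := congrArg (Iner m1 m2 m3 m4) h
  rw [Iner_smul, Iner_smul, hI, hI', mul_one, mul_one] at h2
  obtain rfl := (pow_left_inj₀ hc.le hc'.le two_ne_zero).1 h2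
  exact smul_right_injective _ hc.ne' h

/-- For any positive masses there is exactly one positive distance vector on
`{I = 1, F = 0}` satisfying the Lagrange condition
`∇U + λM∇I + σ∇F = 0`: the restriction of `U` to `M⁺` has a unique critical
point. -/
theorem unique_critical_point (m1 m2 m3 m4 : ℝ) (hm1 : 0 < m1) (hm2 : 0 < m2)
    (hm3 : 0 < m3) (hm4 : 0 < m4) :
    ∃! r : Fin 6 → ℝ, (∀ i, 0 < r i) ∧ Iner m1 m2 m3 m4 r = 1 ∧ F r = 0 ∧
      ∃ lam sigma : ℝ,
        fderiv ℝ (U m1 m2 m3 m4) r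
            + (lam * (m1 + m2 + m3 + m4)) • fderiv ℝ (Iner m1 m2 m3 m4) r
            + sigma • fderiv ℝ F r = 0 := by
  have hM : m1 + m2 + m3 + m4 ≠ 0 := by positivity
  obtain ⟨ρ, s, hρ, hFρ, hL⟩ := exists_normalized hm1 hm2 hm3 hm4
  have hI := Iner_pos hm1 hm2 hm3 hm4 hρ
  have hc : 0 < (√(Iner m1 m2 m3 m4 ρ))⁻¹ := by positivity
  refine ⟨(√(Iner m1 m2 m3 m4 ρ))⁻¹ • ρ, ⟨fun i => mul_pos hc (hρ i), ?_, ?_, ?_⟩, ?_⟩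
  · rw [Iner_smul, inv_pow, Real.sq_sqrt hI.le, inv_mul_cancel₀ hI.ne']
  · rw [F_smul, hFρ, mul_zero]
  · have h := hL.smul hc.ne'
    rw [← mul_div_cancel₀ (s / _) (two_ne_zero (α := ℝ))] at h
    exact ⟨_, _, (lagrange_iff _ _ _ _ hM _ (fun i => mul_pos hc (hρ i)) _ _).2 h⟩
  · rintro r ⟨hr, hIr, hFr, lam, sigma, h⟩
    rw [lagrange_iff _ _ _ _ hM _ hr] at h
    obtain ⟨c, s', hc', hL'⟩ := exists_normalization hm1 hm2 hm3 hm4 hr hFr h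
    have hcr : ∀ i, 0 < (c • r) i := fun i => mul_pos hc' (hr i)
    have hFcr : F (c • r) = 0 := by rw [F_smul, hFr, mul_zero]
    have heq : c • r = ρ := by
      have h0 := nonneg_of_F_eq_zero hm1 hm2 hm3 hm4 hρ hL hFρ
      have h0' := nonneg_of_F_eq_zero hm1 hm2 hm3 hm4 hcr hL' hFcr
      rcases le_total s' s with hle | hle
      · exact eq_of_le hm1 hm2 hm3 hm4 hcr hρ hL' hL hFcr hFρ h0 hle
      · exact (eq_of_le hm1 hm2 hm3 hm4 hρ hcr hL hL' hFρ hFcr h0' hle).symm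
    refine eq_of_smul_eq_smul hc' (inv_pos.2 hc) hIr ?_ ?_
    · rw [Iner_smul, inv_pow, Real.sq_sqrt hI.le, inv_mul_cancel₀ hI.ne']
    · rw [smul_smul, inv_mul_cancel₀ hc.ne', one_smul, heq]
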